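/- For every integer d ≥ 2, h(ℕ^d) ≥ (d+1)·h(ℕ^{d−1}) + d; that is, if every subset of ℕ^{d−1} of size h is coverable, then every subset of ℕ^d of size (d+1)h + d is coverable. -/

import Mathlib

/-- A winning guessing strategy in the hat guessing game on `G` with `q` colors:
each vertex `v` gets a guessing function from colorings of its open neighborhood
to colors, such that for every coloring some vertex guesses its own color. -/
def HatWinning {V : Type*} (G : SimpleGraph V) (q : ℕ) : Prop :=
  ∃ g : (v : V) → ({w : V // G.Adj v w} → Fin q) → Fin q,
    ∀ χ : V → Fin q, ∃ v : V, g v (fun w => χ w.1) = χ v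

/-- The hat guessing number of `G`: the largest number of colors for which the
players have a winning strategy. -/
noncomputable def hatGuessingNumber {V : Type*} (G : SimpleGraph V) : ℕ :=
  sSup {q : ℕ | HatWinning G q}

/-- Sylvester's sequence: `s 0 = 2`, `s (n+1) = s n ^ 2 - s n + 1`. -/
def sylvester : ℕ → ℕ
  | 0 => 2
  | n + 1 => sylvester n ^ 2 - sylvester n + 1

/-- The graph `G_d(N)`: vertices are the vertices of the complete rooted `N`-ary
tree of depth `d` (encoded as lists of child-indices of length at most `d`), and
each vertex is adjacent to all of its ancestors (its proper prefixes). -/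
def ancTree (d N : ℕ) : SimpleGraph {l : List (Fin N) // l.length ≤ d} where
  Adj v w := v ≠ w ∧ (v.1 <+: w.1 ∨ w.1 <+: v.1)
  symm := by
    constructor
    intro v w h
    exact ⟨h.1.symm, h.2.symm⟩
  loopless := by
    constructor
    intro v h
    exact h.1 rfl

/-- The book graph `B_{d,n}`: a spine of `d` vertices forming a clique, completely
joined to `n` pages forming an independent set. -/
def bookGraph (d n : ℕ) : SimpleGraph (Fin d ⊕ Fin n) where
  Adj x y := x ≠ y ∧ (x.isLeft ∨ y.isLeft)
  symm := by
    constructor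
    intro x y h
    exact ⟨h.1.symm, h.2.symm⟩
  loopless := by
    constructor
    intro x h
    exact h.1 rfl

/-- A set `S ⊆ ℕ^d` is coverable if it can be partitioned into parts `S_1, …, S_d`
such that `S_i` contains at most one point on every line parallel to the `i`-th
coordinate axis, i.e. two distinct points in part `i` differ in some coordinate
other than the `i`-th. -/
def Coverable {d : ℕ} (S : Set (Fin d → ℕ)) : Prop :=
  ∃ f : (Fin d → ℕ) → Fin d, ∀ x ∈ S, ∀ y ∈ S,
    x ≠ y → f x = f y → ∃ j : Fin d, j ≠ f x ∧ x j ≠ y j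

/-- `hcov d` is `h(ℕ^d)`: the largest `t` such that every `t`-element subset of
`ℕ^d` is coverable. -/
noncomputable def hcov (d : ℕ) : ℕ :=
  sSup {t : ℕ | ∀ S : Set (Fin d → ℕ), S.Finite → S.ncard = t → Coverable S}

/-- `p` is a left-to-right path with `k` edges in a graph on `Fin n` with the
natural vertex ordering: a strictly increasing sequence of `k+1` vertices in which
consecutive vertices are adjacent. -/
def IsLTRPath {n : ℕ} (G : SimpleGraph (Fin n)) (k : ℕ) (p : Fin (k + 1) → Fin n) : Prop :=
  StrictMono p ∧ ∀ i : Fin k, G.Adj (p i.castSucc) (p i.succ)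

/-- The depth of a vertex `v`: the largest number of edges in a left-to-right path
ending at `v`. -/
noncomputable def ltrDepth {n : ℕ} (G : SimpleGraph (Fin n)) (v : Fin n) : ℕ :=
  sSup {k : ℕ | ∃ p : Fin (k + 1) → Fin n, IsLTRPath G k p ∧ p (Fin.last k) = v}
theorem Coverable.mono {d : ℕ} {S T : Set (Fin d → ℕ)} (hS : Coverable S) (hTS : T ⊆ S) :
    Coverable T := by
  obtain ⟨f, hf⟩ := hS
  exact ⟨f, fun x hx y hy => hf x (hTS hx) y (hTS hy)⟩

/-- If all sets of size `h` are coverable, then so are all smaller finite sets. -/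
theorem coverable_of_card_le {d h : ℕ} [NeZero d]
    (hh : ∀ S : Set (Fin d → ℕ), S.Finite → S.ncard = h → Coverable S)
    (S : Finset (Fin d → ℕ)) (hS : S.card ≤ h) : Coverable (S : Set (Fin d → ℕ)) := by
  obtain ⟨T, hST, hT⟩ := Infinite.exists_superset_card_eq S h hS
  exact (hh T T.finite_toSet (by rw [Set.ncard_coe_finset, hT])).mono (by exact_mod_cast hST)

/-- A layer orthogonal to axis `i` whose projection is coverable can be split off. -/
theorem Coverable.of_layer {n : ℕ} {S : Set (Fin (n + 1) → ℕ)} (i : Fin (n + 1)) (c : ℕ)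
    (hlayer : Coverable (Set.image i.removeNth {x ∈ S | x i = c}))
    (hrest : Coverable {x ∈ S | x i ≠ c}) : Coverable S := by
  obtain ⟨g, hg⟩ := hlayer
  obtain ⟨f, hf⟩ := hrest
  refine ⟨fun x => if x i = c then i.succAbove (g (i.removeNth x)) else f x, ?_⟩
  intro x hx y hy hxy hfxy
  by_cases hxc : x i = c <;> by_cases hyc : y i = c <;>
    simp only [hxc, hyc, if_true, if_false] at hfxy ⊢
  · have hne : i.removeNth x ≠ i.removeNth y := fun h => hxy <| by
      rw [← Fin.insertNth_self_removeNth i x, ← Fin.insertNth_self_removeNth i y, h, hxc, hyc]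
    obtain ⟨j, hj, hxyj⟩ := hg _ ⟨x, ⟨hx, hxc⟩, rfl⟩ _ ⟨y, ⟨hy, hyc⟩, rfl⟩ hne
      (Fin.succAbove_right_injective hfxy)
    exact ⟨i.succAbove j, fun h => hj (Fin.succAbove_right_injective h), hxyj⟩
  · exact ⟨i, Fin.ne_succAbove i _, by rw [hxc]; exact Ne.symm hyc⟩
  · refine ⟨i, ?_, by rw [hyc]; exact hxc⟩
    rw [hfxy]
    exact Fin.ne_succAbove i _
  · exact hf x ⟨hx, hxc⟩ y ⟨hy, hyc⟩ hxy hfxy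

theorem Finset.exists_injOn_fin_of_card_le {α : Type*} (A : Finset α) {n : ℕ}
    (hA : A.card ≤ n + 1) : ∃ e : α → Fin (n + 1), Set.InjOn e A := by
  classical
  refine ⟨fun a => if h : a ∈ A then Fin.castLE hA (A.equivFin ⟨a, h⟩) else 0, ?_⟩
  intro a ha b hb hab
  simp only [Finset.mem_coe] at ha hb
  simpa [ha, hb] using hab

/-- A subset of a grid with at most `d` values in each of the `d` coordinates is coverable:
use the sum of the coordinates modulo `d`. -/
theorem coverable_of_card_image_le {n : ℕ} (S : Finset (Fin (n + 1) → ℕ))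
    (hS : ∀ i, (S.image fun x => x i).card ≤ n + 1) :
    Coverable (S : Set (Fin (n + 1) → ℕ)) := by
  choose e he using fun i => (S.image fun x => x i).exists_injOn_fin_of_card_le (hS i)
  refine ⟨fun x => ∑ i, e i (x i), ?_⟩
  intro x hx y hy hxy hsum
  dsimp only at hsum ⊢
  by_contra! hcon
  set k := ∑ i, e i (x i) with hk
  have hrest : ∑ i ∈ Finset.univ.erase k, e i (x i) = ∑ i ∈ Finset.univ.erase k, e i (y i) :=
    Finset.sum_congr rfl fun j hj => by rw [hcon j (Finset.ne_of_mem_erase hj)]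
  have hek : e k (x k) = e k (y k) := by
    have hsum' := hk.symm.trans hsum
    rw [← Finset.add_sum_erase _ _ (Finset.mem_univ k),
      ← Finset.add_sum_erase _ (fun i => e i (y i)) (Finset.mem_univ k), hrest] at hsum'
    exact add_right_cancel hsum'
  refine hxy (funext fun j => ?_)
  by_cases hj : j = k
  · rw [hj]
    exact he k (Finset.mem_image_of_mem _ hx) (Finset.mem_image_of_mem _ hy) hek
  · exact hcon j hj

theorem coverable_of_card_le_mul_add {n h : ℕ}
    (hh : ∀ T : Finset (Fin n → ℕ), T.card ≤ h → Coverable (T : Set (Fin n → ℕ)))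
    (S : Finset (Fin (n + 1) → ℕ)) (hS : S.card ≤ (n + 2) * h + (n + 1)) :
    Coverable (S : Set (Fin (n + 1) → ℕ)) := by
  classical
  induction S using Finset.strongInduction with
  | H S ih =>
    by_cases hsmall : ∃ x ∈ S, ∃ i, (S.filter fun y => y i = x i).card ≤ h
    · obtain ⟨x, hx, i, hle⟩ := hsmall
      apply Coverable.of_layer i (x i)
      · have := hh ((S.filter fun y => y i = x i).image i.removeNth)
          (Finset.card_image_le.trans hle)
        simpa using this
      · have hss : (S.filter fun y => y i ≠ x i) ⊂ S :=
          Finset.filter_ssubset.2 ⟨x, hx, by simp⟩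
        have := ih _ hss ((Finset.card_le_card hss.subset).trans hS)
        simpa using this
    · push Not at hsmall
      refine coverable_of_card_image_le S fun i => ?_
      by_contra! hlt
      have hsum : (h + 1) * (S.image fun x => x i).card ≤ S.card := by
        refine Finset.mul_card_image_le_card S (h + 1) fun c hc => ?_
        obtain ⟨x, hx, rfl⟩ := Finset.mem_image.1 hc
        exact hsmall x hx i
      nlinarith

/-- The grid with `d + 1` values in each of the `d` coordinates is not coverable. -/
theorem not_coverable_grid (n : ℕ) :
    ¬ Coverable (Fintype.piFinset fun _ : Fin (n + 1) => Finset.range (n + 2) :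
      Set (Fin (n + 1) → ℕ)) := by
  rintro ⟨f, hf⟩
  obtain ⟨x, hx, y, hy, hxy, heq⟩ := Finset.exists_ne_map_eq_of_card_lt_of_maps_to
    (s := Fintype.piFinset fun _ : Fin (n + 1) => Finset.range (n + 2))
    (t := Finset.univ ×ˢ Fintype.piFinset fun _ : Fin n => Finset.range (n + 2))
    (f := fun x => (f x, (f x).removeNth x))
    (by
      simp only [Finset.card_product, Finset.card_univ, Fintype.card_fin,
        Fintype.card_piFinset_const, Finset.card_range, pow_succ']
      gcongr
      omega)
    (by
      intro x hx
      simp only [Finset.mem_coe, Fintype.mem_piFinset, Finset.mem_product, Finset.mem_univ,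
        true_and] at hx ⊢
      exact fun j => hx _)
  simp only [Prod.mk.injEq] at heq
  obtain ⟨hfxy, hrem⟩ := heq
  obtain ⟨j, hj, hxyj⟩ := hf x hx y hy hxy hfxy
  obtain ⟨k, rfl⟩ := Fin.exists_succAbove_eq hj
  rw [← hfxy] at hrem
  exact hxyj (congrFun hrem k)

theorem bddAbove_coverable_card (d : ℕ) [NeZero d] :
    BddAbove {t : ℕ | ∀ S : Set (Fin d → ℕ), S.Finite → S.ncard = t → Coverable S} := by
  obtain ⟨n, rfl⟩ := Nat.exists_eq_succ_of_ne_zero (NeZero.ne d)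
  refine ⟨(Fintype.piFinset fun _ : Fin (n + 1) => Finset.range (n + 2)).card, fun t ht => ?_⟩
  by_contra! hlt
  exact not_coverable_grid n (coverable_of_card_le ht _ hlt.le)

theorem coverable_of_ncard_eq_hcov (d : ℕ) [NeZero d] (S : Set (Fin d → ℕ)) (hS : S.Finite)
    (hcard : S.ncard = hcov d) : Coverable S := by
  refine Nat.sSup_mem ⟨0, fun T hT hT0 => ?_⟩ (bddAbove_coverable_card d) S hS hcard
  rw [(Set.ncard_eq_zero hT).1 hT0]
  exact ⟨fun _ => 0, fun x hx => hx.elim⟩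

/-- Recursive lower bound: `h(ℕ^d) ≥ (d+1)·h(ℕ^(d-1)) + d` for `d ≥ 2`; that is,
if every subset of `ℕ^(d-1)` of size `h` is coverable, then every subset of `ℕ^d`
of size `(d+1)h + d` is coverable. -/
theorem hcov_recursive_lower (d : ℕ) (hd : 2 ≤ d) :
    (d + 1) * hcov (d - 1) + d ≤ hcov d ∧
    ∀ h : ℕ, (∀ S : Set (Fin (d - 1) → ℕ), S.Finite → S.ncard = h → Coverable S) →
      ∀ S : Set (Fin d → ℕ), S.Finite → S.ncard = (d + 1) * h + d → Coverable S := by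
  obtain ⟨n, rfl⟩ := Nat.exists_eq_add_of_le' hd
  have key : ∀ h : ℕ,
      (∀ S : Set (Fin (n + 1) → ℕ), S.Finite → S.ncard = h → Coverable S) →
      ∀ S : Set (Fin (n + 2) → ℕ), S.Finite → S.ncard = (n + 2 + 1) * h + (n + 2) →
        Coverable S := by
    intro h hh S hS hcard
    lift S to Finset (Fin (n + 2) → ℕ) using hS
    rw [Set.ncard_coe_finset] at hcard
    exact coverable_of_card_le_mul_add (coverable_of_card_le hh) S hcard.le
  exact ⟨le_csSup (bddAbove_coverable_card (n + 2))
    (key _ (coverable_of_ncard_eq_hcov (n + 1))), key⟩
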